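/- arXiv:2403.14319 — 5 statements merged into one kernel-verified Lean document; each statement's English description precedes it below -/
import Mathlib

section
/- Let n, m ≥ 1, let U ⊆ ℝⁿ be a connected open set, and let A : U → (ℝⁿ →ₗ (ℝᵐ →ₗ ℝᵐ)) be a continuous map (a continuous family of bilinear maps ℝⁿ × ℝᵐ → ℝᵐ). If ρ, σ : U → ℝᵐ are differentiable and satisfy the linear first-order PDE system Dρ(x)(v) = A(x)(v)(ρ(x)) and Dσ(x)(v) = A(x)(v)(σ(x)) for all x ∈ U and v ∈ ℝⁿ, and if ρ(x₀) = σ(x₀) for some point x₀ ∈ U, then ρ = σ on all of U. (A solution of the system is determined by its value at one point.) -/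
/-!
The difference `f` of two solutions satisfies `‖Df‖ ≤ K * ‖f‖` near every point of `U`. Along a
segment this is a Grönwall inequality, so on a ball where the bound holds `f` vanishes either
everywhere or nowhere; connectedness of `U` then spreads one zero to all of `U`.
-/

open Filter Set Topology

section

variable {E F : Type*} [NormedAddCommGroup E] [NormedSpace ℝ E] [NormedAddCommGroup F]
  [NormedSpace ℝ F]

theorem eq_zero_of_convex_of_norm_fderivWithin_le_mul_norm {s : Set E} (hs : Convex ℝ s)
    {f : E → F} {f' : E → E →L[ℝ] F} {K : ℝ} (hf : ∀ x ∈ s, HasFDerivWithinAt f (f' x) s x)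
    (hf' : ∀ x ∈ s, ‖f' x‖ ≤ K * ‖f x‖) {x y : E} (hx : x ∈ s) (hy : y ∈ s) (hfx : f x = 0) :
    f y = 0 := by
  let γ : ℝ → E := AffineMap.lineMap x y
  have hγs : MapsTo γ (Icc 0 1) s := fun _ ht ↦ hs.lineMap_mem hx hy ht
  have hderiv : ∀ t ∈ Icc (0 : ℝ) 1,
      HasDerivWithinAt (f ∘ γ) (f' (γ t) (y - x)) (Icc 0 1) t := fun t ht ↦
    (hf (γ t) (hγs ht)).comp_hasDerivWithinAt t AffineMap.hasDerivWithinAt_lineMap hγs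
  have hbound : ∀ t ∈ Ico (0 : ℝ) 1, ‖f' (γ t) (y - x)‖ ≤ K * ‖y - x‖ * ‖(f ∘ γ) t‖ :=
    fun t ht ↦ calc
      ‖f' (γ t) (y - x)‖ ≤ ‖f' (γ t)‖ * ‖y - x‖ := (f' (γ t)).le_opNorm _
      _ ≤ K * ‖f (γ t)‖ * ‖y - x‖ := by gcongr; exact hf' _ (hγs (Ico_subset_Icc_self ht))
      _ = K * ‖y - x‖ * ‖(f ∘ γ) t‖ := mul_right_comm _ _ _
  have hzero : (f ∘ γ) 1 = 0 :=
    eq_zero_of_abs_deriv_le_mul_abs_self_of_eq_zero_right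
      (fun t ht ↦ (hderiv t ht).continuousWithinAt)
      (fun t ht ↦ (hderiv t (Ico_subset_Icc_self ht)).mono_of_mem_nhdsWithin
        (Icc_mem_nhdsGE_of_mem ht))
      (by simpa [γ] using hfx) hbound 1 (right_mem_Icc.2 zero_le_one)
  simpa [γ] using hzero

theorem eventually_eq_zero_iff_of_norm_fderiv_le_mul_norm {f : E → F} {f' : E → E →L[ℝ] F}
    {K : ℝ} {x : E} (hf : ∀ᶠ y in 𝓝 x, HasFDerivAt f (f' y) y)
    (hf' : ∀ᶠ y in 𝓝 x, ‖f' y‖ ≤ K * ‖f y‖) : ∀ᶠ y in 𝓝 x, (f x = 0 ↔ f y = 0) := by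
  obtain ⟨r, hr, hball⟩ := Metric.eventually_nhds_iff_ball.1 (hf.and hf')
  have hzero : ∀ y ∈ Metric.ball x r, ∀ z ∈ Metric.ball x r, f y = 0 → f z = 0 :=
    fun y hy z hz ↦ eq_zero_of_convex_of_norm_fderivWithin_le_mul_norm (convex_ball x r)
      (fun w hw ↦ (hball w hw).1.hasFDerivWithinAt) (fun w hw ↦ (hball w hw).2) hy hz
  have hx : x ∈ Metric.ball x r := Metric.mem_ball_self hr
  filter_upwards [Metric.ball_mem_nhds x hr] with y hy
  exact ⟨hzero x hx y hy, hzero y hy x hx⟩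

theorem eq_zero_of_isPreconnected_of_norm_fderiv_le_mul_norm {U : Set E} (hUopen : IsOpen U)
    (hUconn : IsPreconnected U) {f : E → F} {f' : E → E →L[ℝ] F}
    (hf : ∀ x ∈ U, HasFDerivAt f (f' x) x)
    (hf' : ∀ x ∈ U, ∃ K : ℝ, ∀ᶠ y in 𝓝 x, ‖f' y‖ ≤ K * ‖f y‖)
    {x y : E} (hx : x ∈ U) (hy : y ∈ U) (hfx : f x = 0) : f y = 0 := by
  have hlocal : ∀ z ∈ U, ∀ᶠ w in 𝓝[U] z, (f z = 0 ↔ f w = 0) := fun z hz ↦ by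
    obtain ⟨K, hK⟩ := hf' z hz
    exact nhdsWithin_le_nhds <| eventually_eq_zero_iff_of_norm_fderiv_le_mul_norm
      ((hUopen.eventually_mem hz).mono hf) hK
  have hiff : f x = 0 ↔ f y = 0 :=
    hUconn.induction₂ (fun z w ↦ f z = 0 ↔ f w = 0) hlocal
      (fun _ _ _ _ _ _ ↦ Iff.trans) (fun _ _ _ _ ↦ Iff.symm) hx hy
  exact hiff.1 hfx

theorem stmt3_general {U : Set E} (hUopen : IsOpen U) (hUconn : IsPreconnected U)
    {A : E → E →L[ℝ] F →L[ℝ] F}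
    (hA : ∀ x ∈ U, (𝓝 x).IsBoundedUnder (· ≤ ·) fun y ↦ ‖A y‖) {ρ σ : E → F}
    (hρ : ∀ x ∈ U, HasFDerivAt ρ ((A x).flip (ρ x)) x)
    (hσ : ∀ x ∈ U, HasFDerivAt σ ((A x).flip (σ x)) x)
    {x₀ : E} (hx₀ : x₀ ∈ U) (h0 : ρ x₀ = σ x₀) : EqOn ρ σ U := by
  have hsub : ∀ x ∈ U, HasFDerivAt (ρ - σ) ((A x).flip ((ρ - σ) x)) x := fun x hx ↦ by
    simpa only [Pi.sub_apply, map_sub] using (hρ x hx).sub (hσ x hx)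
  have hbound : ∀ x ∈ U, ∃ K : ℝ, ∀ᶠ y in 𝓝 x,
      ‖(A y).flip ((ρ - σ) y)‖ ≤ K * ‖(ρ - σ) y‖ := fun x hx ↦ by
    obtain ⟨K, hK⟩ := hA x hx
    refine ⟨K, (eventually_map.1 hK).mono fun y hy ↦ (A y).flip.le_of_opNorm_le ?_ _⟩
    rwa [ContinuousLinearMap.opNorm_flip]
  exact fun x hx ↦ sub_eq_zero.1 <| eq_zero_of_isPreconnected_of_norm_fderiv_le_mul_norm
    hUopen hUconn hsub hbound hx₀ hx (sub_eq_zero.2 h0)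

end

/-- let `U ⊆ ℝⁿ` be a connected open set and `A` a continuous family of
bilinear maps `ℝⁿ × ℝᵐ → ℝᵐ`. If `ρ, σ : U → ℝᵐ` are differentiable and satisfy the
linear first-order PDE system `Dρ(x)(v) = A(x)(v)(ρ(x))`, `Dσ(x)(v) = A(x)(v)(σ(x))`
for all `x ∈ U`, `v ∈ ℝⁿ`, and agree at one point `x₀ ∈ U`, then they agree on `U`. -/
theorem stmt3 (n m : ℕ) (hn : 1 ≤ n) (hm : 1 ≤ m)
    (U : Set (Fin n → ℝ)) (hUopen : IsOpen U) (hUconn : IsConnected U)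
    (A : (Fin n → ℝ) → ((Fin n → ℝ) →L[ℝ] ((Fin m → ℝ) →L[ℝ] (Fin m → ℝ))))
    (hA : ContinuousOn A U)
    (ρ σ : (Fin n → ℝ) → (Fin m → ℝ))
    (hρ : ∀ x ∈ U, HasFDerivAt ρ ((A x).flip (ρ x)) x)
    (hσ : ∀ x ∈ U, HasFDerivAt σ ((A x).flip (σ x)) x)
    (x₀ : Fin n → ℝ) (hx₀ : x₀ ∈ U) (h0 : ρ x₀ = σ x₀) :
    ∀ x ∈ U, ρ x = σ x := by
  have hbdd : ∀ x ∈ U, (𝓝 x).IsBoundedUnder (· ≤ ·) fun y ↦ ‖A y‖ := fun x hx ↦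
    (ContinuousAt.norm (E := (Fin n → ℝ) →L[ℝ] (Fin m → ℝ) →L[ℝ] (Fin m → ℝ))
      (hA.continuousAt (hUopen.mem_nhds hx))).isBoundedUnder_le
  exact stmt3_general hUopen hUconn.isPreconnected hbdd hρ hσ hx₀ h0
end

section
/- Let n, m ≥ 1, let U ⊆ ℝⁿ be a connected open set, and let A : U → (ℝⁿ →ₗ (ℝᵐ →ₗ ℝᵐ)) be a continuous map (a continuous family of bilinear maps ℝⁿ × ℝᵐ → ℝᵐ). Then the set of differentiable functions ρ : U → ℝᵐ satisfying Dρ(x)(v) = A(x)(v)(ρ(x)) for all x ∈ U and v ∈ ℝⁿ is a real vector subspace of the space of functions U → ℝᵐ, and its dimension is at most m. -/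
/-!
Along a segment, a solution satisfies a linear differential inequality `‖g'‖ ≤ K ‖g‖`, so by
Grönwall's inequality it vanishes on the whole segment as soon as it vanishes at one end. Hence
vanishing at a point is a locally constant property, and on a connected open set a solution is
determined by its value at one point: evaluation there embeds the solution space into the space of
values.
-/

open Asymptotics Topology Set

section DifferentialInequality

variable {E F : Type*} [NormedAddCommGroup E] [NormedSpace ℝ E] [NormedAddCommGroup F]
  [NormedSpace ℝ F] {f : E → F} {f' : E → E →L[ℝ] F}

theorem eqOn_zero_of_convex_of_norm_hasFDerivWithinAt_le {s : Set E} {K : ℝ} (hs : Convex ℝ s)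
    (hf : ∀ x ∈ s, HasFDerivWithinAt f (f' x) s x) (hbound : ∀ x ∈ s, ‖f' x‖ ≤ K * ‖f x‖)
    {x : E} (hx : x ∈ s) (hfx : f x = 0) : EqOn f 0 s := by
  intro y hy
  let γ : ℝ → E := AffineMap.lineMap x y
  have hγ : MapsTo γ (Icc 0 1) s := fun t ht ↦ hs.lineMap_mem hx hy ht
  have hderiv : ∀ t ∈ Icc (0 : ℝ) 1,
      HasDerivWithinAt (f ∘ γ) (f' (γ t) (y - x)) (Icc 0 1) t := fun t ht ↦
    (hf _ (hγ ht)).comp_hasDerivWithinAt t AffineMap.hasDerivWithinAt_lineMap hγ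
  have hspeed : ∀ t ∈ Ico (0 : ℝ) 1, ‖f' (γ t) (y - x)‖ ≤ K * ‖y - x‖ * ‖(f ∘ γ) t‖ := by
    intro t ht
    calc ‖f' (γ t) (y - x)‖ ≤ ‖f' (γ t)‖ * ‖y - x‖ := (f' (γ t)).le_opNorm _
      _ ≤ K * ‖f (γ t)‖ * ‖y - x‖ := by
        gcongr
        exact hbound _ (hγ (Ico_subset_Icc_self ht))
      _ = K * ‖y - x‖ * ‖(f ∘ γ) t‖ := mul_right_comm _ _ _
  have hzero := eq_zero_of_abs_deriv_le_mul_abs_self_of_eq_zero_right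
    (fun t ht ↦ (hderiv t ht).continuousWithinAt)
    (fun t ht ↦ (hderiv t (Ico_subset_Icc_self ht)).mono_of_mem_nhdsWithin
      (Icc_mem_nhdsGE_of_mem ht))
    (by simpa [γ] using hfx) hspeed 1 (right_mem_Icc.2 zero_le_one)
  simpa [γ] using hzero

theorem eventually_eq_zero_iff_of_hasFDerivAt_isBigO {x : E}
    (hf : ∀ᶠ y in 𝓝 x, HasFDerivAt f (f' y) y) (hO : f' =O[𝓝 x] f) :
    ∀ᶠ y in 𝓝 x, f x = 0 ↔ f y = 0 := by
  obtain ⟨K, hK⟩ := hO.bound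
  obtain ⟨r, hr, hball⟩ := Metric.eventually_nhds_iff_ball.1 (hf.and hK)
  have hzero {y z : E} (hy : y ∈ Metric.ball x r) (hz : z ∈ Metric.ball x r) (hfy : f y = 0) :
      f z = 0 :=
    eqOn_zero_of_convex_of_norm_hasFDerivWithinAt_le (convex_ball x r)
      (fun w hw ↦ (hball w hw).1.hasFDerivWithinAt) (fun w hw ↦ (hball w hw).2) hy hfy hz
  filter_upwards [Metric.ball_mem_nhds x hr] with y hy
  exact ⟨hzero (Metric.mem_ball_self hr) hy, hzero hy (Metric.mem_ball_self hr)⟩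

theorem eqOn_zero_of_isPreconnected_of_hasFDerivAt_isBigO {U : Set E} (hUopen : IsOpen U)
    (hU : IsPreconnected U) (hf : ∀ x ∈ U, HasFDerivAt f (f' x) x)
    (hO : ∀ x ∈ U, f' =O[𝓝 x] f) {x : E} (hx : x ∈ U) (hfx : f x = 0) : EqOn f 0 U := by
  have hlocal : ∀ y ∈ U, ∀ᶠ z in 𝓝[U] y, f y = 0 ↔ f z = 0 := fun y hy ↦
    (eventually_eq_zero_iff_of_hasFDerivAt_isBigO
      (Filter.mem_of_superset (hUopen.mem_nhds hy) hf) (hO y hy)).filter_mono nhdsWithin_le_nhds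
  intro y hy
  exact (hU.induction₂ (fun y z ↦ f y = 0 ↔ f z = 0) hlocal
    (fun _ _ _ _ _ _ ↦ Iff.trans) (fun _ _ _ _ ↦ Iff.symm) hx hy).1 hfx

end DifferentialInequality

theorem isBoundedUnder_norm_of_continuousOn {X G : Type*} [TopologicalSpace X]
    [SeminormedAddGroup G] {g : X → G} {U : Set X} (hU : IsOpen U) (hg : ContinuousOn g U) :
    ∀ x ∈ U, (𝓝 x).IsBoundedUnder (· ≤ ·) fun y ↦ ‖g y‖ := fun _ hx ↦
  (hg.continuousAt (hU.mem_nhds hx)).norm.isBoundedUnder_le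

theorem isBigO_flip_apply_of_isBoundedUnder {X E F G : Type*} [NormedAddCommGroup E]
    [NormedSpace ℝ E] [NormedAddCommGroup F] [NormedSpace ℝ F] [NormedAddCommGroup G]
    [NormedSpace ℝ G] {A : X → E →L[ℝ] F →L[ℝ] G} {l : Filter X}
    (hA : l.IsBoundedUnder (· ≤ ·) fun x ↦ ‖A x‖) (ρ : X → F) :
    (fun x ↦ (A x).flip (ρ x)) =O[l] ρ := by
  obtain ⟨C, hC⟩ := hA
  refine .of_bound C ((Filter.eventually_map.1 hC).mono fun x hx ↦ ?_)
  calc ‖(A x).flip (ρ x)‖ ≤ ‖(A x).flip‖ * ‖ρ x‖ := (A x).flip.le_opNorm (ρ x)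
    _ = ‖A x‖ * ‖ρ x‖ := by rw [ContinuousLinearMap.opNorm_flip]
    _ ≤ C * ‖ρ x‖ := by gcongr

section LinearSystem

universe u v

variable {E : Type u} {F : Type v} [NormedAddCommGroup E] [NormedSpace ℝ E]
  [NormedAddCommGroup F] [NormedSpace ℝ F]

/-- The space of solutions on `U` of the linear total differential system
`Dρ(x)(v) = A(x)(v)(ρ(x))`. A solution is a function on the subtype `U` having an extension `ρ`
to the whole space that satisfies the system at each point of `U`; for open `U` the choice of the
extension is irrelevant. -/
def totalDifferentialSolutions (U : Set E) (A : E → E →L[ℝ] F →L[ℝ] F) :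
    Submodule ℝ (U → F) where
  carrier := {f | ∃ ρ : E → F,
    (∀ x ∈ U, HasFDerivAt ρ ((A x).flip (ρ x)) x) ∧ ∀ x : U, f x = ρ x}
  zero_mem' := ⟨fun _ ↦ 0, fun x _ ↦ by simpa using hasFDerivAt_const (0 : F) x, fun _ ↦ rfl⟩
  add_mem' := by
    rintro f g ⟨ρ, hρ, hf⟩ ⟨σ, hσ, hg⟩
    exact ⟨ρ + σ, fun x hx ↦ by simpa using (hρ x hx).add (hσ x hx), fun x ↦ by simp [hf, hg]⟩
  smul_mem' := by
    rintro c f ⟨ρ, hρ, hf⟩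
    exact ⟨c • ρ, fun x hx ↦ by simpa using (hρ x hx).const_smul c, fun x ↦ by simp [hf]⟩

variable {U : Set E} {A : E → E →L[ℝ] F →L[ℝ] F}

theorem injective_eval_totalDifferentialSolutions (hUopen : IsOpen U) (hU : IsPreconnected U)
    (hA : ∀ x ∈ U, (𝓝 x).IsBoundedUnder (· ≤ ·) fun y ↦ ‖A y‖) (x : U) :
    Function.Injective
      ((LinearMap.proj x : (U → F) →ₗ[ℝ] F).domRestrict (totalDifferentialSolutions U A)) := by
  rw [injective_iff_map_eq_zero]
  rintro ⟨f, ρ, hρ, hf⟩ hfx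
  have hρx : ρ x = 0 := (hf x).symm.trans hfx
  have hρU : EqOn ρ 0 U := eqOn_zero_of_isPreconnected_of_hasFDerivAt_isBigO hUopen hU hρ
    (fun y hy ↦ isBigO_flip_apply_of_isBoundedUnder (hA y hy) ρ) x.2 hρx
  ext y
  exact (hf y).trans (hρU y.2)

theorem rank_totalDifferentialSolutions_le (hUopen : IsOpen U) (hU : IsPreconnected U)
    (hA : ∀ x ∈ U, (𝓝 x).IsBoundedUnder (· ≤ ·) fun y ↦ ‖A y‖) :
    Module.rank ℝ (totalDifferentialSolutions U A) ≤ Cardinal.lift.{u} (Module.rank ℝ F) := by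
  obtain rfl | ⟨x, hx⟩ := U.eq_empty_or_nonempty
  · rw [rank_subsingleton']
    exact zero_le
  · have hle := LinearMap.lift_rank_le_of_injective _
      (injective_eval_totalDifferentialSolutions hUopen hU hA ⟨x, hx⟩)
    rwa [Cardinal.lift_id'.{v, u}, Cardinal.lift_umax.{v, u}] at hle

theorem stmt4_general (hUopen : IsOpen U) (hU : IsPreconnected U)
    (hA : ∀ x ∈ U, (𝓝 x).IsBoundedUnder (· ≤ ·) fun y ↦ ‖A y‖) :
    ∃ W : Submodule ℝ (U → F),
      (W : Set (U → F)) = {f | ∃ ρ : E → F,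
        (∀ x ∈ U, HasFDerivAt ρ ((A x).flip (ρ x)) x) ∧ ∀ x : U, f x = ρ x} ∧
      Module.rank ℝ W ≤ Cardinal.lift.{u} (Module.rank ℝ F) :=
  ⟨totalDifferentialSolutions U A, rfl, rank_totalDifferentialSolutions_le hUopen hU hA⟩

end LinearSystem

/-- let `U ⊆ ℝⁿ` be a connected open set and `A` a continuous family of
bilinear maps `ℝⁿ × ℝᵐ → ℝᵐ`. The set of differentiable functions `ρ : U → ℝᵐ`
satisfying `Dρ(x)(v) = A(x)(v)(ρ(x))` for all `x ∈ U`, `v ∈ ℝⁿ` is a real vector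
subspace of the functions `U → ℝᵐ` of dimension at most `m`. (A function on `U` is
identified with the restriction of any total function agreeing with it on `U`; since
`U` is open, differentiability and the PDE on `U` depend only on the values on `U`.) -/
theorem stmt4 (n m : ℕ) (hn : 1 ≤ n) (hm : 1 ≤ m)
    (U : Set (Fin n → ℝ)) (hUopen : IsOpen U) (hUconn : IsConnected U)
    (A : (Fin n → ℝ) → ((Fin n → ℝ) →L[ℝ] ((Fin m → ℝ) →L[ℝ] (Fin m → ℝ))))
    (hA : ContinuousOn A U) :
    ∃ W : Submodule ℝ (↥U → (Fin m → ℝ)),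
      (W : Set (↥U → (Fin m → ℝ)))
        = {f | ∃ ρ : (Fin n → ℝ) → (Fin m → ℝ),
            (∀ x ∈ U, HasFDerivAt ρ ((A x).flip (ρ x)) x) ∧ ∀ x : U, f x = ρ ↑x} ∧
      Module.rank ℝ W ≤ (m : Cardinal) := by
  simpa using stmt4_general hUopen hUconn.isPreconnected
    (isBoundedUnder_norm_of_continuousOn
      (G := (Fin n → ℝ) →L[ℝ] (Fin m → ℝ) →L[ℝ] (Fin m → ℝ)) hUopen hA)
end

section
/- Let W ⊆ ℝⁿ be an open set and let S : W → (n×n real matrices) be a smooth map such that S(y) is invertible for every y ∈ W and the i-th row of S depends only on the i-th coordinate (i.e. (S(y))_{ij} = (S(y'))_{ij} for all j whenever y, y' ∈ W satisfy y_i = y'_i). Define, for each α ∈ {1,…,n}, the function I_α : W × ℝⁿ → ℝ by I_α(y,q) = ∑_{i=1}^n (S(y)⁻¹)_{α i} q_i² (the Stäckel construction, S·(I_1,…,I_n)ᵀ = (q_1²,…,q_n²)ᵀ). Then the functions I_1, …, I_n are pairwise in involution: {I_α, I_β} = 0 on W × ℝⁿ for all α, β ∈ {1,…,n}. -/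
open Matrix

/-- The canonical Poisson bracket on the phase space `(Fin n → ℝ) × (Fin n → ℝ)`
with coordinates `(y, q)`. -/
noncomputable def poisson {n : ℕ} (f h : (Fin n → ℝ) × (Fin n → ℝ) → ℝ)
    (z : (Fin n → ℝ) × (Fin n → ℝ)) : ℝ :=
  ∑ i : Fin n,
    (fderiv ℝ f z (Pi.single i 1, 0) * fderiv ℝ h z (0, Pi.single i 1)
      - fderiv ℝ f z (0, Pi.single i 1) * fderiv ℝ h z (Pi.single i 1, 0))

/-!
Fix a point `z` of phase space, put `c = I(z)` and let `wᵢ = qᵢ² - (S c)ᵢ`. Then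
`I_α - c_α = ∑ᵢ (S⁻¹)_αᵢ wᵢ` near `z`, and every `wᵢ` vanishes at `z`, so
`dI_α = ∑ᵢ (S⁻¹)_αᵢ dwᵢ` at `z` without any contribution from the derivative of `S⁻¹`. As the
`i`-th row of `S` depends on `yᵢ` only, `dwᵢ` involves only `dyᵢ` and `dqᵢ`; hence
`{wᵢ, wⱼ} = 0` at `z`, and `{I_α, I_β} = 0` there by bilinearity. The same argument works with
`qᵢ²` replaced by any function of `(yᵢ, qᵢ)`.
-/

open Asymptotics Filter
open scoped Topology

section Calculus

variable {𝕜 E F : Type*} [NontriviallyNormedField 𝕜]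
  [NormedAddCommGroup E] [NormedSpace 𝕜 E] [NormedAddCommGroup F] [NormedSpace 𝕜 F] {x : E}

theorem hasFDerivAt_smul_of_continuousAt_of_eq_zero {g : E → 𝕜} {w : E → F} {w' : E →L[𝕜] F}
    (hg : ContinuousAt g x) (hw : HasFDerivAt w w' x) (hwx : w x = 0) :
    HasFDerivAt (fun y => g y • w y) (g x • w') x := by
  have hw_isBigO : w =O[𝓝 x] fun y => y - x := by simpa [hwx] using hw.isBigO_sub
  have hg_isLittleO : (fun y => g y - g x) =o[𝓝 x] fun _ => (1 : 𝕜) :=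
    (isLittleO_one_iff 𝕜).2 (tendsto_sub_nhds_zero_iff.2 hg)
  have hvariable : HasFDerivAt (fun y => (g y - g x) • w y) (0 : E →L[𝕜] F) x := by
    rw [hasFDerivAt_iff_isLittleO]
    simpa [hwx] using hg_isLittleO.smul_isBigO hw_isBigO
  simpa only [Pi.smul_apply, ← add_smul, sub_add_cancel, zero_add] using
    hvariable.fun_add (hw.fun_const_smul (g x))

theorem hasFDerivAt_apply_eq_zero_of_eventually_eq {f : E → F} {f' : E →L[𝕜] F} {v : E}
    (hf : HasFDerivAt f f' x) (hv : ∀ᶠ t in 𝓝 (0 : 𝕜), f (x + t • v) = f x) : f' v = 0 :=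
  (hf.hasLineDerivAt v).unique ((hasDerivAt_const 0 (f x)).congr_of_eventuallyEq hv)

end Calculus

section MatrixInverse

variable {ι : Type*} [Fintype ι] [DecidableEq ι]

theorem inv_mulVec_sub_eq_inv_mulVec_sub {R : Type*} [CommRing R] {A : Matrix ι ι R}
    (hA : IsUnit A) (b c : ι → R) : A⁻¹ *ᵥ b - c = A⁻¹ *ᵥ (b - A *ᵥ c) := by
  rw [mulVec_sub, mulVec_mulVec, nonsing_inv_mul _ ((isUnit_iff_isUnit_det A).1 hA), one_mulVec]

variable {𝕜 : Type*} [NontriviallyNormedField 𝕜]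

theorem eventually_isUnit_matrix {X : Type*} [TopologicalSpace X] {A : X → Matrix ι ι 𝕜} {x : X}
    (hA : ContinuousAt A x) (hAx : IsUnit (A x)) : ∀ᶠ y in 𝓝 x, IsUnit (A y) := by
  have hdet : ContinuousAt (fun y => (A y).det) x :=
    (continuous_id.matrix_det.continuousAt (x := A x)).comp hA
  simp only [isUnit_iff_isUnit_det, isUnit_iff_ne_zero] at hAx ⊢
  exact hdet.eventually_ne hAx

theorem continuousAt_inv_of_isUnit {X : Type*} [TopologicalSpace X] {A : X → Matrix ι ι 𝕜} {x : X}
    (hA : ContinuousAt A x) (hAx : IsUnit (A x)) : ContinuousAt (fun y => (A y)⁻¹) x := by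
  refine (continuousAt_matrix_inv (A x) ?_).comp hA
  rw [Ring.inverse_eq_inv']
  exact continuousAt_inv₀ ((isUnit_iff_isUnit_det _).1 hAx).ne_zero

variable {E : Type*} [NormedAddCommGroup E] [NormedSpace 𝕜 E]

theorem hasFDerivAt_inv_mulVec_apply {A : E → Matrix ι ι 𝕜} {b : E → ι → 𝕜} {x : E}
    {w' : ι → E →L[𝕜] 𝕜} (hA : ContinuousAt A x) (hAx : IsUnit (A x)) {c : ι → 𝕜}
    (hc : c = (A x)⁻¹ *ᵥ b x) (hw : ∀ i, HasFDerivAt (fun y => (b y - A y *ᵥ c) i) (w' i) x)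
    (a : ι) :
    HasFDerivAt (fun y => ((A y)⁻¹ *ᵥ b y) a) (∑ i, (A x)⁻¹ a i • w' i) x := by
  have hresidual : b x - A x *ᵥ c = 0 := by
    rw [hc, mulVec_mulVec, mul_nonsing_inv _ ((isUnit_iff_isUnit_det _).1 hAx), one_mulVec,
      sub_self]
  have hentry (i : ι) : ContinuousAt (fun y => (A y)⁻¹ a i) x :=
    continuousAt_pi.1 (continuousAt_pi.1 (continuousAt_inv_of_isUnit hA hAx) a) i
  have hsum : HasFDerivAt (fun y => ∑ i, (A y)⁻¹ a i • (b y - A y *ᵥ c) i)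
      (∑ i, (A x)⁻¹ a i • w' i) x :=
    HasFDerivAt.fun_sum fun i _ =>
      hasFDerivAt_smul_of_continuousAt_of_eq_zero (hentry i) (hw i) (congrFun hresidual i)
  refine (hsum.add_const (c a)).congr_of_eventuallyEq ?_
  filter_upwards [eventually_isUnit_matrix hA hAx] with y hy
  exact sub_eq_iff_eq_add.1 (congrFun (inv_mulVec_sub_eq_inv_mulVec_sub hy (b y) c) a)

end MatrixInverse

section Staeckel

variable {n : ℕ}

theorem poisson_eq_zero_of_hasFDerivAt_sum {f h : (Fin n → ℝ) × (Fin n → ℝ) → ℝ}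
    {z : (Fin n → ℝ) × (Fin n → ℝ)} {w' : Fin n → (Fin n → ℝ) × (Fin n → ℝ) →L[ℝ] ℝ}
    (hw' : ∀ i v, v.1 i = 0 → v.2 i = 0 → w' i v = 0) {a b : Fin n → ℝ}
    (hf : HasFDerivAt f (∑ i, a i • w' i) z) (hh : HasFDerivAt h (∑ i, b i • w' i) z) :
    poisson f h z = 0 := by
  have hsum (d : Fin n → ℝ) (k : Fin n) (v : (Fin n → ℝ) × (Fin n → ℝ))
      (hv : ∀ i ≠ k, v.1 i = 0 ∧ v.2 i = 0) : (∑ i, d i • w' i) v = d k * w' k v := by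
    rw [_root_.sum_apply]
    refine Fintype.sum_eq_single k fun i hik => ?_
    simp [hw' i v (hv i hik).1 (hv i hik).2]
  refine Finset.sum_eq_zero fun k _ => ?_
  have hy : ∀ i ≠ k, (Pi.single k 1 : Fin n → ℝ) i = 0 ∧ (0 : Fin n → ℝ) i = 0 :=
    fun i hik => ⟨Pi.single_eq_of_ne hik 1, rfl⟩
  have hq : ∀ i ≠ k, (0 : Fin n → ℝ) i = 0 ∧ (Pi.single k 1 : Fin n → ℝ) i = 0 :=
    fun i hik => (hy i hik).symm
  rw [hf.fderiv, hh.fderiv, hsum a k _ hy, hsum b k _ hq, hsum a k _ hq, hsum b k _ hy]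
  ring

/-- The right-hand side of the Stäckel equations `S(y) I = F(y, q)`, whose `i`-th entry is a
function `F i` of the `i`-th conjugate pair `(yᵢ, qᵢ)` alone. The classical choice is
`F i (yᵢ, qᵢ) = qᵢ²`. -/
def staeckelSource (F : Fin n → ℝ × ℝ → ℝ) (z : (Fin n → ℝ) × (Fin n → ℝ)) : Fin n → ℝ :=
  fun i => F i (z.1 i, z.2 i)

/-- The functions `I_α` of the Stäckel construction: the solution of the Stäckel equations
`S(y) I = F(y, q)`. The matrix inverse makes `I_α` zero where `S(y)` is singular. -/
noncomputable def staeckelIntegral (S : (Fin n → ℝ) → Matrix (Fin n) (Fin n) ℝ)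
    (F : Fin n → ℝ × ℝ → ℝ) (α : Fin n) (z : (Fin n → ℝ) × (Fin n → ℝ)) : ℝ :=
  ((S z.1)⁻¹ *ᵥ staeckelSource F z) α

variable {S : (Fin n → ℝ) → Matrix (Fin n) (Fin n) ℝ} {F : Fin n → ℝ × ℝ → ℝ}
  {z : (Fin n → ℝ) × (Fin n → ℝ)}

theorem differentiableAt_staeckel_residual {i : Fin n}
    (hS : ∀ j, DifferentiableAt ℝ (fun y => S y i j) z.1)
    (hF : DifferentiableAt ℝ (F i) (z.1 i, z.2 i)) (c : Fin n → ℝ) :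
    DifferentiableAt ℝ (fun x => (staeckelSource F x - S x.1 *ᵥ c) i) z := by
  have hpair : DifferentiableAt ℝ
      (fun x : (Fin n → ℝ) × (Fin n → ℝ) => (x.1 i, x.2 i)) z := by fun_prop
  have hentry (j : Fin n) : DifferentiableAt ℝ
      (fun x : (Fin n → ℝ) × (Fin n → ℝ) => S x.1 i j) z :=
    (hS j).comp z differentiableAt_fst
  have hmulVec : DifferentiableAt ℝ
      (fun x : (Fin n → ℝ) × (Fin n → ℝ) => (S x.1 *ᵥ c) i) z := by
    simp only [mulVec, dotProduct]
    exact DifferentiableAt.fun_sum fun j _ => (hentry j).mul_const (c j)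
  exact (hF.comp z hpair).sub hmulVec

theorem fderiv_staeckel_residual_apply_eq_zero {i : Fin n}
    (hS : ∀ j, DifferentiableAt ℝ (fun y => S y i j) z.1)
    (hSrow : ∀ᶠ y in 𝓝 z.1, y i = z.1 i → S y i = S z.1 i)
    (hF : DifferentiableAt ℝ (F i) (z.1 i, z.2 i)) (c : Fin n → ℝ)
    {v : (Fin n → ℝ) × (Fin n → ℝ)} (hv₁ : v.1 i = 0) (hv₂ : v.2 i = 0) :
    fderiv ℝ (fun x => (staeckelSource F x - S x.1 *ᵥ c) i) z v = 0 := by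
  refine hasFDerivAt_apply_eq_zero_of_eventually_eq
    (differentiableAt_staeckel_residual hS hF c).hasFDerivAt ?_
  have hline : Tendsto (fun t : ℝ => (z + t • v).1) (𝓝 0) (𝓝 z.1) :=
    Continuous.tendsto' (by fun_prop) _ _ (by simp)
  filter_upwards [hline.eventually hSrow] with t ht
  have hrow : S (z + t • v).1 i = S z.1 i := ht (by simp [hv₁])
  have hsource : staeckelSource F (z + t • v) i = staeckelSource F z i := by
    simp [staeckelSource, hv₁, hv₂]
  simp only [Pi.sub_apply, mulVec, hsource, hrow]

theorem stmt6_general (hS : ∀ i j, DifferentiableAt ℝ (fun y => S y i j) z.1)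
    (hSinv : IsUnit (S z.1)) (hSrow : ∀ i, ∀ᶠ y in 𝓝 z.1, y i = z.1 i → S y i = S z.1 i)
    (hF : ∀ i, DifferentiableAt ℝ (F i) (z.1 i, z.2 i)) (α β : Fin n) :
    poisson (staeckelIntegral S F α) (staeckelIntegral S F β) z = 0 := by
  have hScont : ContinuousAt (fun x : (Fin n → ℝ) × (Fin n → ℝ) => S x.1) z :=
    continuousAt_pi.2 fun i => continuousAt_pi.2 fun j =>
      (hS i j).continuousAt.comp continuousAt_fst
  have hI (γ : Fin n) := hasFDerivAt_inv_mulVec_apply hScont hSinv rfl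
    (fun i => (differentiableAt_staeckel_residual (hS i) (hF i) _).hasFDerivAt) γ
  exact poisson_eq_zero_of_hasFDerivAt_sum
    (fun i _ => fderiv_staeckel_residual_apply_eq_zero (hS i) (hSrow i) (hF i) _) (hI α) (hI β)

end Staeckel

/-- the functions `I_α(y,q) = ∑ i, (S(y)⁻¹)_{α i} q_i²` arising from the
Stäckel construction with a smooth invertible-valued Stäckel matrix `S` (the `i`-th row
of `S` depends only on the `i`-th coordinate) are pairwise in involution on `W × ℝⁿ`. -/
theorem stmt6 (n : ℕ) (W : Set (Fin n → ℝ)) (hWopen : IsOpen W)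
    (S : (Fin n → ℝ) → Matrix (Fin n) (Fin n) ℝ)
    (hSsmooth : ∀ i j, ContDiffOn ℝ (⊤ : ℕ∞) (fun y => S y i j) W)
    (hSinv : ∀ y ∈ W, IsUnit (S y))
    (hSrow : ∀ i j, ∀ y ∈ W, ∀ y' ∈ W, y i = y' i → S y i j = S y' i j)
    (I : Fin n → (Fin n → ℝ) × (Fin n → ℝ) → ℝ)
    (hI : ∀ α, I α = fun z => ∑ i : Fin n, (S z.1)⁻¹ α i * (z.2 i) ^ 2) :
    ∀ α β, ∀ z : (Fin n → ℝ) × (Fin n → ℝ), z.1 ∈ W → poisson (I α) (I β) z = 0 := by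
  intro α β z hz
  have hW : W ∈ 𝓝 z.1 := hWopen.mem_nhds hz
  have hI' : I = staeckelIntegral S fun _ p => p.2 ^ 2 := funext hI
  rw [hI']
  exact stmt6_general
    (fun i j => ((hSsmooth i j).contDiffAt hW).differentiableAt (by simp)) (hSinv _ hz)
    (fun i => eventually_of_mem hW fun y hy hyi => funext fun j => hSrow i j y hy _ hz hyi)
    (fun _ => by fun_prop) α β
end

section
/- Let W ⊆ ℝⁿ be an open set and let S : W → (n×n real matrices) be a smooth map such that S(y) is invertible for every y ∈ W and the i-th row of S depends only on the i-th coordinate (i.e. (S(y))_{ij} = (S(y'))_{ij} for all j whenever y, y' ∈ W satisfy y_i = y'_i). Define, for each α ∈ {1,…,n}, the function I_α : W × ℝⁿ → ℝ by I_α(y,q) = ∑_{i=1}^n (S(y)⁻¹)_{α i} q_i². Then at every point (y,q) ∈ W × ℝⁿ with q_i ≠ 0 for all i, the differentials dI_1, …, dI_n (total derivatives of I_1, …, I_n as functions on W × ℝⁿ ⊆ ℝ²ⁿ) are linearly independent; in particular the functions I_1, …, I_n arising from the Stäckel construction are functionally independent. -/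
open Matrix

/-! On the fibre `{y} × 𝕜ⁿ` the matrix `S y` is constant, so the `q`-derivatives of the `I_α` form
the Jacobian `(S y)⁻¹ * diagonal (2 * q)`. It is invertible when no `q i` vanishes, and linear
independence of these restricted differentials implies that of the full ones. -/

section Matrix

variable {ι : Type*} [Fintype ι] [DecidableEq ι]

theorem isUnit_nonsing_inv_mul_diagonal {R : Type*} [CommRing R] {A : Matrix ι ι R}
    (hA : IsUnit A) {d : ι → R} (hd : ∀ i, IsUnit (d i)) : IsUnit (A⁻¹ * diagonal d) :=
  (isUnit_nonsing_inv_iff.2 hA).mul <| isUnit_diagonal.2 <| Pi.isUnit_iff.2 hd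

theorem linearIndependent_of_isUnit_apply {K V : Type*} [Field K] [AddCommGroup V] [Module K V]
    {f : ι → V →ₗ[K] K} {v : ι → V} (h : IsUnit (Matrix.of fun i j => f i (v j))) :
    LinearIndependent K f :=
  (linearIndependent_rows_iff_isUnit.2 h).of_comp (LinearMap.pi fun j => LinearMap.applyₗ (v j))

variable {𝕜 E : Type*} [NontriviallyNormedField 𝕜] [NormedAddCommGroup E] [NormedSpace 𝕜 E] {x : E}

theorem differentiableAt_matrix_det {𝔸 : Type*} [NormedCommRing 𝔸] [NormedAlgebra 𝕜 𝔸]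
    {M : E → Matrix ι ι 𝔸} (hM : ∀ i j, DifferentiableAt 𝕜 (fun y => M y i j) x) :
    DifferentiableAt 𝕜 (fun y => (M y).det) x := by
  simp only [det_apply]
  fun_prop

theorem differentiableAt_matrix_adjugate_apply {𝔸 : Type*} [NormedCommRing 𝔸] [NormedAlgebra 𝕜 𝔸]
    {M : E → Matrix ι ι 𝔸} (hM : ∀ i j, DifferentiableAt 𝕜 (fun y => M y i j) x) (i j : ι) :
    DifferentiableAt 𝕜 (fun y => (M y).adjugate i j) x := by
  simp only [adjugate_apply]
  refine differentiableAt_matrix_det fun k l => ?_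
  by_cases hk : k = j
  · simp only [hk, updateRow_self, differentiableAt_const]
  · simpa only [updateRow_ne hk] using hM k l

theorem differentiableAt_matrix_inv_apply {M : E → Matrix ι ι 𝕜}
    (hM : ∀ i j, DifferentiableAt 𝕜 (fun y => M y i j) x) (hx : IsUnit (M x)) (i j : ι) :
    DifferentiableAt 𝕜 (fun y => (M y)⁻¹ i j) x := by
  have hdet : (M x).det ≠ 0 := ((isUnit_iff_isUnit_det _).1 hx).ne_zero
  simp only [inv_def, Matrix.smul_apply, smul_eq_mul, Ring.inverse_eq_inv']
  exact ((differentiableAt_matrix_det hM).inv hdet).mul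
    (differentiableAt_matrix_adjugate_apply hM i j)

end Matrix

theorem fderiv_comp_prodMk_right {𝕜 E F G : Type*} [NontriviallyNormedField 𝕜]
    [NormedAddCommGroup E] [NormedSpace 𝕜 E] [NormedAddCommGroup F] [NormedSpace 𝕜 F]
    [NormedAddCommGroup G] [NormedSpace 𝕜 G] {f : E × F → G} {x : E} {y : F}
    (hf : DifferentiableAt 𝕜 f (x, y)) :
    fderiv 𝕜 (fun y' => f (x, y')) y = fderiv 𝕜 f (x, y) ∘L ContinuousLinearMap.inr 𝕜 E F :=
  (hf.hasFDerivAt.comp y (hasFDerivAt_prodMk_right x y)).fderiv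

theorem fderiv_sum_mul_sq_apply {𝕜 ι : Type*} [NontriviallyNormedField 𝕜] [Fintype ι]
    (c q v : ι → 𝕜) :
    fderiv 𝕜 (fun q' : ι → 𝕜 => ∑ i, c i * q' i ^ 2) q v = ∑ i, c i * (2 * q i * v i) := by
  have hterm (i : ι) : HasFDerivAt (fun q' : ι → 𝕜 => c i * q' i ^ 2)
      (c i • (2 * q i) • ContinuousLinearMap.proj (R := 𝕜) (φ := fun _ : ι => 𝕜) i) q := by
    simpa using ((hasFDerivAt_apply i q).pow 2).const_mul (c i)
  rw [(HasFDerivAt.fun_sum fun i _ => hterm i).fderiv]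
  simp

section StackelIntegral

variable {E ι : Type*} [Fintype ι] [DecidableEq ι]

/-- The Stäckel function `I_α` of the matrix function `S`, that is, the `α`-th component of the
solution of `S y *ᵥ I = q ^ 2`. Its value is `0` where `S y` is not invertible. -/
noncomputable def stackelIntegral {R : Type*} [CommRing R] (S : E → Matrix ι ι R) (α : ι)
    (z : E × (ι → R)) : R :=
  ∑ i, (S z.1)⁻¹ α i * z.2 i ^ 2

variable {𝕜 : Type*} [NontriviallyNormedField 𝕜] [NormedAddCommGroup E] [NormedSpace 𝕜 E]
  {S : E → Matrix ι ι 𝕜} {y : E}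

theorem differentiableAt_stackelIntegral (hS : ∀ i j, DifferentiableAt 𝕜 (fun x => S x i j) y)
    (hSinv : IsUnit (S y)) (α : ι) (q : ι → 𝕜) :
    DifferentiableAt 𝕜 (stackelIntegral S α) (y, q) := by
  have hinv (i : ι) : DifferentiableAt 𝕜 (fun z : E × (ι → 𝕜) => (S z.1)⁻¹ α i) (y, q) :=
    DifferentiableAt.fun_comp' (y, q) (g := fun x => (S x)⁻¹ α i)
      (differentiableAt_matrix_inv_apply hS hSinv α i) differentiableAt_fst
  exact DifferentiableAt.fun_sum fun i _ => (hinv i).mul (by fun_prop)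

theorem fderiv_stackelIntegral_apply_single
    (hS : ∀ i j, DifferentiableAt 𝕜 (fun x => S x i j) y) (hSinv : IsUnit (S y)) (q : ι → 𝕜)
    (α k : ι) :
    fderiv 𝕜 (stackelIntegral S α) (y, q) (0, Pi.single k 1) =
      ((S y)⁻¹ * diagonal fun i => 2 * q i) α k :=
  calc fderiv 𝕜 (stackelIntegral S α) (y, q) (0, Pi.single k 1)
    _ = fderiv 𝕜 (fun q' => stackelIntegral S α (y, q')) q (Pi.single k 1) := by
      rw [fderiv_comp_prodMk_right (differentiableAt_stackelIntegral hS hSinv α q),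
        ContinuousLinearMap.comp_apply, ContinuousLinearMap.inr_apply]
    _ = ∑ i, (S y)⁻¹ α i * (2 * q i * (Pi.single k 1 : ι → 𝕜) i) :=
      fderiv_sum_mul_sq_apply ((S y)⁻¹ α) q (Pi.single k 1)
    _ = ((S y)⁻¹ * diagonal fun i => 2 * q i) α k := by simp [Pi.single_apply, mul_diagonal]

theorem stmt7_general [NeZero (2 : 𝕜)] (hS : ∀ i j, DifferentiableAt 𝕜 (fun x => S x i j) y)
    (hSinv : IsUnit (S y)) {q : ι → 𝕜} (hq : ∀ i, q i ≠ 0) :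
    LinearIndependent 𝕜 (fun α => fderiv 𝕜 (stackelIntegral S α) (y, q)) := by
  have hjacobian : Matrix.of (fun α k => fderiv 𝕜 (stackelIntegral S α) (y, q) (0, Pi.single k 1)) =
      (S y)⁻¹ * diagonal fun i => 2 * q i :=
    Matrix.ext (fderiv_stackelIntegral_apply_single hS hSinv q)
  have hunit : IsUnit ((S y)⁻¹ * diagonal fun i => 2 * q i) :=
    isUnit_nonsing_inv_mul_diagonal hSinv fun i =>
      (mul_ne_zero two_ne_zero (hq i)).isUnit
  rw [← hjacobian] at hunit
  exact (linearIndependent_of_isUnit_apply hunit).of_comp (ContinuousLinearMap.coeLM 𝕜)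

end StackelIntegral

/-- the functions `I_α(y,q) = ∑ i, (S(y)⁻¹)_{α i} q_i²` arising from the
Stäckel construction with a smooth invertible-valued Stäckel matrix `S` (the `i`-th row
of `S` depends only on the `i`-th coordinate) have linearly independent differentials at
every point `(y,q) ∈ W × ℝⁿ` with all `q_i ≠ 0`; in particular they are functionally
independent. -/
theorem stmt7 (n : ℕ) (W : Set (Fin n → ℝ)) (hWopen : IsOpen W)
    (S : (Fin n → ℝ) → Matrix (Fin n) (Fin n) ℝ)
    (hSsmooth : ∀ i j, ContDiffOn ℝ (⊤ : ℕ∞) (fun y => S y i j) W)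
    (hSinv : ∀ y ∈ W, IsUnit (S y))
    (hSrow : ∀ i j, ∀ y ∈ W, ∀ y' ∈ W, y i = y' i → S y i j = S y' i j)
    (I : Fin n → (Fin n → ℝ) × (Fin n → ℝ) → ℝ)
    (hI : ∀ α, I α = fun z => ∑ i : Fin n, (S z.1)⁻¹ α i * (z.2 i) ^ 2) :
    ∀ y ∈ W, ∀ q : Fin n → ℝ, (∀ i, q i ≠ 0) →
      LinearIndependent ℝ (fun α => fderiv ℝ (I α) (y, q)) := by
  intro y hy q hq
  obtain rfl : I = stackelIntegral S := funext hI
  exact stmt7_general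
    (fun i j => ((hSsmooth i j).contDiffAt (hWopen.mem_nhds hy)).differentiableAt (by simp))
    (hSinv y hy) hq
end

section
/- Let n ≥ 1, let U ⊆ ℝⁿ be a connected open set, let v_1, …, v_n : U → ℝⁿ be smooth vector fields whose values at each point of U are linearly independent, let ε_1, …, ε_n ∈ {−1, 1}, and let b : {1,…,n} → {1,…,m} be a surjection (a partition of the frame into m blocks). Define V_j : U × ℝⁿ → ℝ by V_j(x,p) = ∑_{i : b(i) = j} ε_i ⟨v_i(x), p⟩² for j ∈ {1,…,m}, and H(x,p) = ½ ∑_{j=1}^m V_j(x,p). Then the set of smooth maps ρ = (ρ_1, …, ρ_m) : U → ℝᵐ such that the function I_ρ(x,p) = ∑_{j=1}^m ρ_j(x) V_j(x,p) satisfies {H, I_ρ} = 0 on U × ℝⁿ is a real vector space of dimension at most m. -/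
/-!
In the frame coordinates `q i = ⟨v i x, p⟩` the equation `{H, I_ρ} = 0` reads
`∑ j, V_j(q) dρ_j(∑ i, ε i q i v i) = ∑ j, ρ_j {H, V_j}(q)`, an identity of cubic forms in `q`. The
coefficient of `q k ^ 2 * q i` on the left is a nonzero multiple of `dρ_{b k}(v i)`, and since every
block is hit by `b`, all first derivatives of `ρ` are continuous linear expressions in `ρ`. By
Grönwall's inequality a solution of such a closed system that vanishes at one point vanishes near
it, hence on the whole connected set `U`, so evaluation at a point embeds the solution space
in `ℝᵐ`.
-/

section UniqueContinuation

open Asymptotics Set Topology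

variable {E F : Type*} [NormedAddCommGroup E] [NormedSpace ℝ E]
  [NormedAddCommGroup F] [NormedSpace ℝ F]

theorem eq_zero_of_norm_fderiv_le_mul_norm_of_convex {f : E → F} {s : Set E} {C : ℝ} {x y : E}
    (hs : Convex ℝ s) (hf : ∀ z ∈ s, DifferentiableAt ℝ f z)
    (hbound : ∀ z ∈ s, ‖fderiv ℝ f z‖ ≤ C * ‖f z‖) (hx : x ∈ s) (hy : y ∈ s) (hfx : f x = 0) :
    f y = 0 := by
  let γ : ℝ → E := AffineMap.lineMap x y
  have hγ : ∀ t ∈ Icc (0 : ℝ) 1, γ t ∈ s := fun t ht => hs.lineMap_mem hx hy ht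
  have hderiv : ∀ t ∈ Icc (0 : ℝ) 1, HasDerivAt (f ∘ γ) (fderiv ℝ f (γ t) (y - x)) t :=
    fun t ht => (hf _ (hγ t ht)).hasFDerivAt.comp_hasDerivAt t AffineMap.hasDerivAt_lineMap
  have hgrowth : ∀ t ∈ Ico (0 : ℝ) 1,
      ‖fderiv ℝ f (γ t) (y - x)‖ ≤ C * ‖y - x‖ * ‖(f ∘ γ) t‖ := fun t ht =>
    calc ‖fderiv ℝ f (γ t) (y - x)‖ ≤ ‖fderiv ℝ f (γ t)‖ * ‖y - x‖ :=
          ContinuousLinearMap.le_opNorm _ _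
      _ ≤ C * ‖f (γ t)‖ * ‖y - x‖ := by gcongr; exact hbound _ (hγ t (Ico_subset_Icc_self ht))
      _ = C * ‖y - x‖ * ‖(f ∘ γ) t‖ := by rw [Function.comp_apply]; ring
  have hend : (f ∘ γ) 1 = 0 :=
    eq_zero_of_abs_deriv_le_mul_abs_self_of_eq_zero_right
      (fun t ht => (hderiv t ht).continuousAt.continuousWithinAt)
      (fun t ht => (hderiv t (Ico_subset_Icc_self ht)).hasDerivWithinAt)
      (by simp [γ, hfx]) hgrowth 1 (right_mem_Icc.2 zero_le_one)
  simpa [γ] using hend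

theorem eqOn_zero_of_fderiv_isBigO_self {f : E → F} {U : Set E} {x₀ : E} (hU : IsOpen U)
    (hUconn : IsPreconnected U) (hf : DifferentiableOn ℝ f U)
    (hbound : ∀ x ∈ U, fderiv ℝ f =O[𝓝 x] f) (hx₀ : x₀ ∈ U) (hfx₀ : f x₀ = 0) :
    EqOn f 0 U := by
  have hopen : IsOpen (U ∩ f ⁻¹' {0}) := by
    rw [isOpen_iff_mem_nhds]
    rintro x ⟨hxU, hfx⟩
    obtain ⟨C, hC⟩ := (hbound x hxU).bound
    obtain ⟨r, hr, hball⟩ := Metric.mem_nhds_iff.1 (Filter.inter_mem (hU.mem_nhds hxU) hC)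
    filter_upwards [Metric.ball_mem_nhds x hr] with y hy
    exact ⟨(hball hy).1, eq_zero_of_norm_fderiv_le_mul_norm_of_convex (convex_ball x r)
      (fun z hz => hf.differentiableAt (hU.mem_nhds (hball hz).1)) (fun z hz => (hball hz).2)
      (Metric.mem_ball_self hr) hy hfx⟩
  have hclosed : closure (U ∩ f ⁻¹' {0}) ∩ U ⊆ U ∩ f ⁻¹' {0} := by
    rintro x ⟨hx, hxU⟩
    have hfx : f x ∈ closure {0} :=
      (hf.differentiableAt (hU.mem_nhds hxU)).continuousAt.continuousWithinAt.mem_closure hx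
        fun y hy => hy.2
    exact ⟨hxU, by simpa using hfx⟩
  exact fun x hx =>
    (hUconn.subset_of_closure_inter_subset hopen ⟨x₀, hx₀, hx₀, hfx₀⟩ hclosed hx).2

end UniqueContinuation

section RankOfEvaluation

variable {K X κ : Type*} [Field K] [Fintype κ]

theorem rank_le_card_of_eq_zero_of_apply_eq_zero (S : Submodule K (X → κ → K)) (x₀ : X)
    (h : ∀ f ∈ S, f x₀ = 0 → f = 0) : Module.rank K S ≤ Fintype.card κ := by
  let eval : S →ₗ[K] κ → K := LinearMap.proj x₀ ∘ₗ S.subtype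
  have heval : Function.Injective eval := by
    rw [← LinearMap.ker_eq_bot, LinearMap.ker_eq_bot']
    exact fun f hf => Subtype.ext (h f f.2 hf)
  simpa using LinearMap.lift_rank_le_of_injective eval heval

end RankOfEvaluation

section DualFrame

open Matrix

variable {ι K : Type*} [Fintype ι] [DecidableEq ι] [Field K]

/-- The frame dual to a basis `v` of `ι → K` with respect to the dot product: its `i`-th vector is
the `i`-th column of the inverse of the matrix with rows `v`. It is a junk value if `v` is linearly
dependent. -/
noncomputable def dualFrame (v : ι → ι → K) (i : ι) : ι → K :=
  (Matrix.of v)⁻¹.col i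

theorem isUnit_det_of_linearIndependent {v : ι → ι → K} (hv : LinearIndependent K v) :
    IsUnit (Matrix.of v).det := by
  rwa [← isUnit_iff_isUnit_det, ← linearIndependent_rows_iff_isUnit]

theorem dotProduct_dualFrame {v : ι → ι → K} (hv : LinearIndependent K v) (i k : ι) :
    v i ⬝ᵥ dualFrame v k = (1 : Matrix ι ι K) i k := by
  rw [← mul_nonsing_inv _ (isUnit_det_of_linearIndependent hv)]
  rfl

theorem dotProduct_sum_smul_dualFrame {v : ι → ι → K} (hv : LinearIndependent K v) (q : ι → K)
    (i : ι) : v i ⬝ᵥ ∑ k, q k • dualFrame v k = q i := by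
  simp [dotProduct_sum, dotProduct_smul, dotProduct_dualFrame hv, one_apply]

theorem sum_dotProduct_dualFrame_smul {v : ι → ι → K} (hv : LinearIndependent K v) (w : ι → K) :
    ∑ i, (w ⬝ᵥ dualFrame v i) • v i = w := by
  have hinv : (w ᵥ* (Matrix.of v)⁻¹) ᵥ* Matrix.of v = w := by
    rw [vecMul_vecMul, nonsing_inv_mul _ (isUnit_det_of_linearIndependent hv), vecMul_one]
  rw [vecMul_eq_sum] at hinv
  exact hinv

theorem continuousAt_dualFrame [TopologicalSpace K] [IsTopologicalDivisionRing K]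
    {X : Type*} [TopologicalSpace X] {v : ι → X → ι → K} {x : X}
    (hv : ∀ i, ContinuousAt (v i) x) (hvx : LinearIndependent K (v · x)) (i : ι) :
    ContinuousAt (fun y => dualFrame (v · y) i) x := by
  have hdet : ContinuousAt Ring.inverse (Matrix.of (v · x)).det := by
    rw [Ring.inverse_eq_inv']
    exact continuousAt_inv₀ (isUnit_det_of_linearIndependent hvx).ne_zero
  have hmatrix : ContinuousAt (fun y => Matrix.of (v · y)) x := continuousAt_pi.2 hv
  have hinv : ContinuousAt (fun y => (Matrix.of (v · y))⁻¹) x :=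
    ContinuousAt.comp (f := fun y => Matrix.of (v · y)) (continuousAt_matrix_inv _ hdet) hmatrix
  exact continuousAt_pi.2 fun s => continuousAt_pi.1 (continuousAt_pi.1 hinv s) i

end DualFrame

section FrameEstimate

open Asymptotics Topology

variable {ι X F G : Type*} [Fintype ι] [TopologicalSpace X]
  [NormedAddCommGroup F] [NormedSpace ℝ F] [NormedAddCommGroup G]

theorem isBigO_of_isBigO_apply_frame {v : ι → X → ι → ℝ} {x : X} (hv : ∀ i, ContinuousAt (v i) x)
    (hvli : ∀ᶠ y in 𝓝 x, LinearIndependent ℝ (v · y)) {T : X → (ι → ℝ) →L[ℝ] F} {g : X → G}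
    (hT : ∀ i, (fun y => T y (v i y)) =O[𝓝 x] g) : T =O[𝓝 x] g := by
  classical
  have hcoord : ∀ i s, (fun y => dualFrame (v · y) i s) =O[𝓝 x] (fun _ => (1 : ℝ)) := fun i s =>
    (continuousAt_pi.1 (continuousAt_dualFrame hv hvli.self_of_nhds i) s).isBigO
  have hstd : ∀ s, (fun y => T y (Pi.single s 1)) =O[𝓝 x] g := by
    intro s
    have hsum : (fun y => ∑ i, dualFrame (v · y) i s • T y (v i y)) =O[𝓝 x] g :=
      IsBigO.fun_sum fun i _ => by simpa using (hcoord i s).smul (hT i).norm_right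
    refine hsum.congr' (hvli.mono fun y hy => ?_) .rfl
    conv_rhs => rw [← sum_dotProduct_dualFrame_smul hy (Pi.single s 1)]
    simp
  have hexpand : T = fun y => ∑ s, (ContinuousLinearMap.proj s : (ι → ℝ) →L[ℝ] ℝ).smulRight
      (T y (Pi.single s 1)) := by
    ext y w
    conv_lhs => rw [pi_eq_sum_univ' w]
    simp
  rw [hexpand]
  refine IsBigO.fun_sum fun s _ => IsBigO.of_norm_left ?_
  simpa only [ContinuousLinearMap.norm_smulRight_apply] using (hstd s).norm_left.const_mul_left _

end FrameEstimate

section Polarization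

variable {ι κ R : Type*} [Fintype ι] [Fintype κ] [DecidableEq κ] [CommRing R]

/-- The cubic form `∑ j, W j q * ⟨D j, q⟩` pairing the block quadratic forms
`W j q = ∑ i with b i = j, ε i * q i ^ 2` with linear forms `⟨D j, q⟩ = ∑ i, ε i * q i * D j i`.
The bracket `{H, I_ρ}` is of this shape along each fibre, up to a term of order zero in `ρ`. -/
def blockCubic (ε : ι → R) (b : ι → κ) (D : κ → ι → R) (q : ι → R) : R :=
  ∑ j, (∑ i with b i = j, ε i * q i ^ 2) * ∑ i, ε i * q i * D j i

theorem blockCubic_eq_sum (ε : ι → R) (b : ι → κ) (D : κ → ι → R) (q : ι → R) :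
    blockCubic ε b D q = ∑ l, ∑ i, ε l * ε i * D (b l) i * (q l ^ 2 * q i) := by
  rw [blockCubic, ← Finset.sum_fiberwise Finset.univ b]
  refine Finset.sum_congr rfl fun j _ => ?_
  rw [Finset.sum_mul]
  refine Finset.sum_congr rfl fun l hl => ?_
  rw [(Finset.mem_filter.1 hl).2, Finset.mul_sum]
  exact Finset.sum_congr rfl fun i _ => by ring

theorem blockCubic_add_add_sub (ε : ι → R) (b : ι → κ) (D : κ → ι → R) (p q : ι → R) :
    blockCubic ε b D (p + q) + blockCubic ε b D (p - q) - 2 * blockCubic ε b D p =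
      ∑ l, ∑ i, ε l * ε i * D (b l) i * (2 * q l ^ 2 * p i + 4 * p l * q l * q i) := by
  simp only [blockCubic_eq_sum, Finset.mul_sum, ← Finset.sum_add_distrib,
    ← Finset.sum_sub_distrib, Pi.add_apply, Pi.sub_apply]
  exact Finset.sum_congr rfl fun l _ => Finset.sum_congr rfl fun i _ => by ring

theorem blockCubic_single_add_add_sub [DecidableEq ι] (ε : ι → R) (b : ι → κ) (D : κ → ι → R)
    (i k : ι) :
    blockCubic ε b D (Pi.single i 1 + Pi.single k 1) +
        blockCubic ε b D (Pi.single i 1 - Pi.single k 1) - 2 * blockCubic ε b D (Pi.single i 1) =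
      (if i = k then 6 else 2) * (ε k * ε i) * D (b k) i := by
  rw [blockCubic_add_add_sub]
  simp only [mul_add, Finset.sum_add_distrib, Pi.single_apply, ite_pow, one_pow, ne_eq,
    OfNat.ofNat_ne_zero, not_false_eq_true, zero_pow, mul_ite, mul_one, mul_zero,
    Finset.sum_ite_eq', Finset.mem_univ, if_true]
  rcases eq_or_ne i k with rfl | hik
  · simp only [if_true]
    ring
  · simp only [hik, hik.symm, if_false, add_zero]
    ring

end Polarization

section HamiltonianVectorField

variable {n : ℕ} {f g h : (Fin n → ℝ) × (Fin n → ℝ) → ℝ} {z : (Fin n → ℝ) × (Fin n → ℝ)}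

/-- The Hamiltonian vector field `(∂f/∂p, -∂f/∂x)` of `f` on phase space. -/
noncomputable def hamiltonianVectorField (f : (Fin n → ℝ) × (Fin n → ℝ) → ℝ)
    (z : (Fin n → ℝ) × (Fin n → ℝ)) : (Fin n → ℝ) × (Fin n → ℝ) :=
  (fun i => fderiv ℝ f z (0, Pi.single i 1), fun i => -fderiv ℝ f z (Pi.single i 1, 0))

theorem poisson_eq_neg_fderiv_apply (f h : (Fin n → ℝ) × (Fin n → ℝ) → ℝ)
    (z : (Fin n → ℝ) × (Fin n → ℝ)) :
    poisson f h z = -fderiv ℝ h z (hamiltonianVectorField f z) := by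
  have hcoord : hamiltonianVectorField f z =
      ∑ i, (fderiv ℝ f z (0, Pi.single i 1) • (Pi.single i 1, 0) -
        fderiv ℝ f z (Pi.single i 1, 0) • (0, Pi.single i 1)) := by
    ext s <;> simp [hamiltonianVectorField, Prod.fst_sum, Prod.snd_sum, Pi.single_apply]
  rw [hcoord, map_sum, ← Finset.sum_neg_distrib, poisson]
  refine Finset.sum_congr rfl fun i _ => ?_
  rw [map_sub, map_smul, map_smul, smul_eq_mul, smul_eq_mul, neg_sub]

theorem poisson_zero_right (f : (Fin n → ℝ) × (Fin n → ℝ) → ℝ) (z : (Fin n → ℝ) × (Fin n → ℝ)) :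
    poisson f 0 z = 0 := by
  simp [poisson_eq_neg_fderiv_apply]

theorem poisson_add_right (hg : DifferentiableAt ℝ g z) (hh : DifferentiableAt ℝ h z) :
    poisson f (g + h) z = poisson f g z + poisson f h z := by
  simp only [poisson_eq_neg_fderiv_apply, fderiv_add hg hh, add_apply, neg_add]

theorem poisson_const_smul_right (c : ℝ) (hh : DifferentiableAt ℝ h z) :
    poisson f (c • h) z = c * poisson f h z := by
  simp [poisson_eq_neg_fderiv_apply, fderiv_const_smul hh]

theorem poisson_comp_fst {r : (Fin n → ℝ) → ℝ} (hr : DifferentiableAt ℝ r z.1) :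
    poisson f (fun w => r w.1) z = -fderiv ℝ r z.1 (hamiltonianVectorField f z).1 := by
  have hcomp : HasFDerivAt (fun w : (Fin n → ℝ) × (Fin n → ℝ) => r w.1)
      ((fderiv ℝ r z.1).comp (.fst ℝ _ _)) z := hr.hasFDerivAt.comp z hasFDerivAt_fst
  rw [poisson_eq_neg_fderiv_apply, hcomp.fderiv]
  rfl

theorem poisson_mul_right (hg : DifferentiableAt ℝ g z) (hh : DifferentiableAt ℝ h z) :
    poisson f (fun w => g w * h w) z = g z * poisson f h z + h z * poisson f g z := by
  simp only [poisson_eq_neg_fderiv_apply, fderiv_fun_mul hg hh, add_apply,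
    smul_apply, smul_eq_mul]
  ring

theorem poisson_sum_right {κ : Type*} {s : Finset κ} {h : κ → (Fin n → ℝ) × (Fin n → ℝ) → ℝ}
    (hh : ∀ j ∈ s, DifferentiableAt ℝ (h j) z) :
    poisson f (fun w => ∑ j ∈ s, h j w) z = ∑ j ∈ s, poisson f (h j) z := by
  simp [poisson_eq_neg_fderiv_apply, fderiv_fun_sum hh]

theorem continuousOn_poisson {s : Set ((Fin n → ℝ) × (Fin n → ℝ))} (hs : IsOpen s)
    (hf : ContDiffOn ℝ 1 f s) (hh : ContDiffOn ℝ 1 h s) : ContinuousOn (poisson f h) s := by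
  have hdf := hf.continuousOn_fderiv_of_isOpen hs le_rfl
  have hdh := hh.continuousOn_fderiv_of_isOpen hs le_rfl
  unfold poisson
  fun_prop

end HamiltonianVectorField

section IntegralSubmodule

variable {n : ℕ} {κ : Type*} [Fintype κ] {ρ : (Fin n → ℝ) → κ → ℝ}
  {V : κ → (Fin n → ℝ) × (Fin n → ℝ) → ℝ} {z : (Fin n → ℝ) × (Fin n → ℝ)}

theorem differentiableAt_sum_coeff_mul (hρ : DifferentiableAt ℝ ρ z.1)
    (hV : ∀ j, DifferentiableAt ℝ (V j) z) :
    DifferentiableAt ℝ (fun w => ∑ j, ρ w.1 j * V j w) z :=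
  DifferentiableAt.fun_sum fun j _ =>
    ((differentiableAt_pi.1 hρ j).comp z differentiableAt_fst).mul (hV j)

theorem poisson_sum_coeff_mul (f : (Fin n → ℝ) × (Fin n → ℝ) → ℝ)
    (hρ : DifferentiableAt ℝ ρ z.1) (hV : ∀ j, DifferentiableAt ℝ (V j) z) :
    poisson f (fun w => ∑ j, ρ w.1 j * V j w) z =
      ∑ j, ρ z.1 j * poisson f (V j) z -
        ∑ j, V j z * fderiv ℝ ρ z.1 (hamiltonianVectorField f z).1 j := by
  have hρj : ∀ j, DifferentiableAt ℝ (fun x => ρ x j) z.1 := differentiableAt_pi.1 hρ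
  have hρjz : ∀ j, DifferentiableAt ℝ (fun w : (Fin n → ℝ) × (Fin n → ℝ) => ρ w.1 j) z :=
    fun j => (hρj j).comp z differentiableAt_fst
  rw [poisson_sum_right fun j _ => (hρjz j).fun_mul (hV j), ← Finset.sum_sub_distrib]
  refine Finset.sum_congr rfl fun j _ => ?_
  rw [poisson_mul_right (hρjz j) (hV j), poisson_comp_fst (hρj j), fderiv_apply hρ j]
  simp [sub_eq_add_neg]

/-- The maps `U → κ → ℝ` that extend to a map `ρ` of class `C^k` on `U` whose associated function
`I_ρ (x, p) = ∑ j, ρ x j * V j (x, p)` Poisson-commutes with `H` on `U × ℝⁿ`. The regularity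
assumptions make the bracket additive, so that these maps form a subspace. -/
def integralSubmodule {U : Set (Fin n → ℝ)} (hU : IsOpen U) {k : WithTop ℕ∞} (hk : k ≠ 0)
    (H : (Fin n → ℝ) × (Fin n → ℝ) → ℝ) (hV : ∀ j z, z.1 ∈ U → DifferentiableAt ℝ (V j) z) :
    Submodule ℝ (U → κ → ℝ) where
  carrier := {f | ∃ ρ : (Fin n → ℝ) → κ → ℝ, ContDiffOn ℝ k ρ U ∧
    (∀ z : (Fin n → ℝ) × (Fin n → ℝ), z.1 ∈ U →
      poisson H (fun w => ∑ j, ρ w.1 j * V j w) z = 0) ∧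
    ∀ x : U, f x = ρ x}
  zero_mem' := by
    refine ⟨0, contDiffOn_const, fun z _ => ?_, fun _ => rfl⟩
    simpa [Pi.zero_def] using poisson_zero_right H z
  add_mem' := by
    rintro f g ⟨ρ, hρ, hHρ, hfρ⟩ ⟨σ, hσ, hHσ, hgσ⟩
    refine ⟨ρ + σ, hρ.add hσ, fun z hz => ?_, fun x => by simp [hfρ, hgσ]⟩
    have hdiff : ∀ {τ : (Fin n → ℝ) → κ → ℝ}, ContDiffOn ℝ k τ U →
        DifferentiableAt ℝ (fun w => ∑ j, τ w.1 j * V j w) z := fun hτ =>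
      differentiableAt_sum_coeff_mul ((hτ.differentiableOn hk).differentiableAt (hU.mem_nhds hz))
        fun j => hV j z hz
    have hsum := poisson_add_right (f := H) (hdiff hρ) (hdiff hσ)
    rw [hHρ z hz, hHσ z hz, add_zero] at hsum
    simpa [add_mul, Finset.sum_add_distrib, Pi.add_def] using hsum
  smul_mem' := by
    rintro c f ⟨ρ, hρ, hHρ, hfρ⟩
    refine ⟨c • ρ, hρ.const_smul c, fun z hz => ?_, fun x => by simp [hfρ]⟩
    have hsmul := poisson_const_smul_right (f := H) c (differentiableAt_sum_coeff_mul
      ((hρ.differentiableOn hk).differentiableAt (hU.mem_nhds hz)) fun j => hV j z hz)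
    rw [hHρ z hz, mul_zero] at hsmul
    simpa [mul_assoc, Finset.mul_sum, Pi.smul_def] using hsmul

end IntegralSubmodule

section FrameMetric

open Asymptotics Topology

variable {n : ℕ} {κ : Type*} [DecidableEq κ]

/-- The function `(x, p) ↦ ⟨u x, p⟩` on phase space that is linear in the momenta. -/
def momentum (u : (Fin n → ℝ) → Fin n → ℝ) (z : (Fin n → ℝ) × (Fin n → ℝ)) : ℝ :=
  ∑ s, u z.1 s * z.2 s

/-- The block `V_j` of a quadratic form in the momenta which is diagonal in the frame `v`, with the
entries `ε`; the blocks are the fibres of `b`. -/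
def blockQuadratic (ε : Fin n → ℝ) (v : Fin n → (Fin n → ℝ) → Fin n → ℝ) (b : Fin n → κ) (j : κ)
    (z : (Fin n → ℝ) × (Fin n → ℝ)) : ℝ :=
  ∑ i with b i = j, ε i * momentum (v i) z ^ 2

/-- The Hamiltonian `H = ½ ∑ j, V_j` of the pseudo-Riemannian metric with orthogonal
frame `v`. -/
noncomputable def blockHamiltonian [Fintype κ] (ε : Fin n → ℝ)
    (v : Fin n → (Fin n → ℝ) → Fin n → ℝ) (b : Fin n → κ) (z : (Fin n → ℝ) × (Fin n → ℝ)) : ℝ :=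
  1 / 2 * ∑ j, blockQuadratic ε v b j z

theorem blockHamiltonian_eq_sum [Fintype κ] (ε : Fin n → ℝ) (v : Fin n → (Fin n → ℝ) → Fin n → ℝ)
    (b : Fin n → κ) :
    blockHamiltonian ε v b = fun z => 1 / 2 * ∑ i, ε i * momentum (v i) z ^ 2 := by
  ext z
  simp only [blockHamiltonian, blockQuadratic, Finset.sum_fiberwise]

section Regularity

variable {U : Set (Fin n → ℝ)} {k : WithTop ℕ∞} {u : (Fin n → ℝ) → Fin n → ℝ}
  {v : Fin n → (Fin n → ℝ) → Fin n → ℝ}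

theorem contDiffOn_momentum (hu : ContDiffOn ℝ k u U) :
    ContDiffOn ℝ k (momentum u) (U ×ˢ Set.univ) := by
  refine ContDiffOn.sum fun s _ => ContDiffOn.mul ?_ ?_
  · exact (contDiffOn_pi.1 hu s).comp contDiffOn_fst fun z hz => hz.1
  · exact contDiffOn_pi.1 contDiffOn_snd s

theorem contDiffOn_blockQuadratic (hv : ∀ i, ContDiffOn ℝ k (v i) U) (ε : Fin n → ℝ)
    (b : Fin n → κ) (j : κ) : ContDiffOn ℝ k (blockQuadratic ε v b j) (U ×ˢ Set.univ) :=
  ContDiffOn.sum fun i _ => contDiffOn_const.mul ((contDiffOn_momentum (hv i)).pow 2)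

theorem contDiffOn_blockHamiltonian [Fintype κ] (hv : ∀ i, ContDiffOn ℝ k (v i) U)
    (ε : Fin n → ℝ) (b : Fin n → κ) :
    ContDiffOn ℝ k (blockHamiltonian ε v b) (U ×ˢ Set.univ) :=
  contDiffOn_const.mul (ContDiffOn.sum fun j _ => contDiffOn_blockQuadratic hv ε b j)

end Regularity

section Derivative

variable {v : Fin n → (Fin n → ℝ) → Fin n → ℝ} {z : (Fin n → ℝ) × (Fin n → ℝ)}

theorem hasFDerivAt_momentum {u : (Fin n → ℝ) → Fin n → ℝ} (hu : DifferentiableAt ℝ u z.1) :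
    HasFDerivAt (momentum u)
      (∑ s, (u z.1 s • (ContinuousLinearMap.proj s).comp (.snd ℝ (Fin n → ℝ) (Fin n → ℝ)) +
        z.2 s • ((ContinuousLinearMap.proj s).comp (fderiv ℝ u z.1)).comp (.fst ℝ _ _))) z := by
  have hfst : ∀ s, HasFDerivAt (fun w : (Fin n → ℝ) × (Fin n → ℝ) => u w.1 s)
      (((ContinuousLinearMap.proj s).comp (fderiv ℝ u z.1)).comp (.fst ℝ _ _)) z := fun s =>
    (hasFDerivAt_pi'.1 hu.hasFDerivAt s).comp z hasFDerivAt_fst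
  have hsnd : ∀ s, HasFDerivAt (fun w : (Fin n → ℝ) × (Fin n → ℝ) => w.2 s)
      ((ContinuousLinearMap.proj s).comp (.snd ℝ (Fin n → ℝ) (Fin n → ℝ))) z := fun s =>
    ((ContinuousLinearMap.proj s).comp (.snd ℝ (Fin n → ℝ) (Fin n → ℝ))).hasFDerivAt
  exact HasFDerivAt.fun_sum fun s _ => (hfst s).fun_mul (hsnd s)

theorem fderiv_momentum_apply_snd {u : (Fin n → ℝ) → Fin n → ℝ} (hu : DifferentiableAt ℝ u z.1)
    (η : Fin n → ℝ) : fderiv ℝ (momentum u) z (0, η) = ∑ s, u z.1 s * η s := by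
  simp [(hasFDerivAt_momentum hu).fderiv]

theorem differentiableAt_blockQuadratic (hv : ∀ i, DifferentiableAt ℝ (v i) z.1) (ε : Fin n → ℝ)
    (b : Fin n → κ) (j : κ) : DifferentiableAt ℝ (blockQuadratic ε v b j) z :=
  DifferentiableAt.fun_sum fun i _ =>
    ((hasFDerivAt_momentum (hv i)).differentiableAt.pow 2).const_mul (ε i)

theorem hasFDerivAt_blockHamiltonian [Fintype κ] (hv : ∀ i, DifferentiableAt ℝ (v i) z.1)
    (ε : Fin n → ℝ) (b : Fin n → κ) :
    HasFDerivAt (blockHamiltonian ε v b)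
      (∑ i, (ε i * momentum (v i) z) • fderiv ℝ (momentum (v i)) z) z := by
  rw [blockHamiltonian_eq_sum]
  refine ((HasFDerivAt.fun_sum fun i _ => (((hasFDerivAt_momentum
    (hv i)).differentiableAt.hasFDerivAt.pow 2).const_mul (ε i))).const_mul
      (1 / 2 : ℝ)).congr_fderiv ?_
  rw [Finset.smul_sum]
  refine Finset.sum_congr rfl fun i _ => ?_
  simp only [smul_smul]
  congr 1
  ring

theorem hamiltonianVectorField_blockHamiltonian_fst [Fintype κ]
    (hv : ∀ i, DifferentiableAt ℝ (v i) z.1) (ε : Fin n → ℝ) (b : Fin n → κ) :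
    (hamiltonianVectorField (blockHamiltonian ε v b) z).1 =
      ∑ i, (ε i * momentum (v i) z) • v i z.1 := by
  ext s
  simp [hamiltonianVectorField, (hasFDerivAt_blockHamiltonian hv ε b).fderiv,
    fderiv_momentum_apply_snd (hv _), Pi.single_apply]

end Derivative

section Integral

variable [Fintype κ] {U : Set (Fin n → ℝ)} {x : Fin n → ℝ} {ε : Fin n → ℝ} {b : Fin n → κ}
  {v : Fin n → (Fin n → ℝ) → Fin n → ℝ} {ρ : (Fin n → ℝ) → κ → ℝ}

theorem blockCubic_fderiv_eq_sum_poisson (hv : ∀ i, DifferentiableAt ℝ (v i) x)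
    (hvli : LinearIndependent ℝ (v · x)) (hρ : DifferentiableAt ℝ ρ x)
    (hcomm : ∀ p, poisson (blockHamiltonian ε v b)
      (fun w => ∑ j, ρ w.1 j * blockQuadratic ε v b j w) (x, p) = 0) (q : Fin n → ℝ) :
    blockCubic ε b (fun j i => fderiv ℝ ρ x (v i x) j) q =
      ∑ j, ρ x j * poisson (blockHamiltonian ε v b) (blockQuadratic ε v b j)
        (x, ∑ i, q i • dualFrame (v · x) i) := by
  set p := ∑ i, q i • dualFrame (v · x) i
  have hmomentum : ∀ i, momentum (v i) (x, p) = q i := dotProduct_sum_smul_dualFrame hvli q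
  have hbracket := hcomm p
  rw [poisson_sum_coeff_mul _ hρ fun j => differentiableAt_blockQuadratic hv ε b j, sub_eq_zero,
    hamiltonianVectorField_blockHamiltonian_fst hv] at hbracket
  simp only [hbracket, blockCubic, blockQuadratic, hmomentum, map_sum, map_smul, Finset.sum_apply,
    Pi.smul_apply, smul_eq_mul]

variable (hU : IsOpen U) (hv : ∀ i, ContDiffOn ℝ 1 (v i) U)
  (hvli : ∀ x ∈ U, LinearIndependent ℝ (v · x)) (hρ : DifferentiableOn ℝ ρ U)
  (hcomm : ∀ z : (Fin n → ℝ) × (Fin n → ℝ), z.1 ∈ U → poisson (blockHamiltonian ε v b)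
    (fun w => ∑ j, ρ w.1 j * blockQuadratic ε v b j w) z = 0)

include hU hv hvli hρ hcomm

theorem isBigO_blockCubic_fderiv (hx : x ∈ U) (q : Fin n → ℝ) :
    (fun y => blockCubic ε b (fun j i => fderiv ℝ ρ y (v i y) j) q) =O[𝓝 x] ρ := by
  have hdual : ∀ i, ContinuousAt (fun y => dualFrame (v · y) i) x :=
    continuousAt_dualFrame (fun i => (hv i).continuousOn.continuousAt (hU.mem_nhds hx)) (hvli x hx)
  have hbracket : ∀ j, (fun y => poisson (blockHamiltonian ε v b) (blockQuadratic ε v b j)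
      (y, ∑ i, q i • dualFrame (v · y) i)) =O[𝓝 x] (fun _ => (1 : ℝ)) := by
    intro j
    have hopen := hU.prod (isOpen_univ (X := Fin n → ℝ))
    have hcont := (continuousOn_poisson hopen (contDiffOn_blockHamiltonian hv ε b)
      (contDiffOn_blockQuadratic hv ε b j)).continuousAt (hopen.mem_nhds
        (Set.mk_mem_prod hx (Set.mem_univ (∑ i, q i • dualFrame (v · x) i))))
    exact (hcont.comp (f := fun y => (y, ∑ i, q i • dualFrame (v · y) i))
      (by fun_prop)).isBigO
  have hsum : (fun y => ∑ j, ρ y j * poisson (blockHamiltonian ε v b) (blockQuadratic ε v b j)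
      (y, ∑ i, q i • dualFrame (v · y) i)) =O[𝓝 x] ρ :=
    IsBigO.fun_sum fun j _ => by
      simpa using (isBigO_pi.1 (isBigO_refl ρ (𝓝 x)) j).norm_right.mul (hbracket j)
  refine hsum.congr' ?_ .rfl
  filter_upwards [hU.mem_nhds hx] with y hy
  have hUy := hU.mem_nhds hy
  exact (blockCubic_fderiv_eq_sum_poisson
    (fun i => ((hv i).differentiableOn one_ne_zero).differentiableAt hUy) (hvli y hy)
    (hρ.differentiableAt hUy) (fun p => hcomm (y, p) hy) q).symm

theorem isBigO_fderiv_of_poisson_eq_zero (hε : ∀ i, ε i ≠ 0) (hb : Function.Surjective b)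
    (hx : x ∈ U) : fderiv ℝ ρ =O[𝓝 x] ρ := by
  have hcubic := isBigO_blockCubic_fderiv hU hv hvli hρ hcomm hx
  have hentry : ∀ i k, (fun y => fderiv ℝ ρ y (v i y) (b k)) =O[𝓝 x] ρ := by
    intro i k
    have hpolar := ((hcubic (Pi.single i 1 + Pi.single k 1)).add
      (hcubic (Pi.single i 1 - Pi.single k 1))).sub ((hcubic (Pi.single i 1)).const_mul_left 2)
    simp only [blockCubic_single_add_add_sub] at hpolar
    have hcoeff : (if i = k then 6 else 2) * (ε k * ε i) ≠ 0 := by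
      split_ifs <;> simp [hε]
    exact (isBigO_const_mul_left_iff hcoeff).1 hpolar
  refine isBigO_of_isBigO_apply_frame
    (fun i => (hv i).continuousOn.continuousAt (hU.mem_nhds hx))
    (Filter.eventually_of_mem (hU.mem_nhds hx) hvli) fun i => isBigO_pi.2 fun j => ?_
  obtain ⟨k, rfl⟩ := hb j
  exact hentry i k

end Integral

end FrameMetric

theorem stmt8_general {n : ℕ} {κ : Type*} [Fintype κ] [DecidableEq κ]
    {U : Set (Fin n → ℝ)} (hU : IsOpen U) (hUconn : IsConnected U)
    {v : Fin n → (Fin n → ℝ) → Fin n → ℝ} (hv : ∀ i, ContDiffOn ℝ 1 (v i) U)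
    (hvli : ∀ x ∈ U, LinearIndependent ℝ (v · x)) {ε : Fin n → ℝ} (hε : ∀ i, ε i ≠ 0)
    {b : Fin n → κ} (hb : Function.Surjective b) {k : WithTop ℕ∞} (hk : k ≠ 0) :
    ∃ Sol : Submodule ℝ (U → κ → ℝ),
      (Sol : Set (U → κ → ℝ)) = {f | ∃ ρ : (Fin n → ℝ) → κ → ℝ, ContDiffOn ℝ k ρ U ∧
        (∀ z : (Fin n → ℝ) × (Fin n → ℝ), z.1 ∈ U → poisson (blockHamiltonian ε v b)
          (fun w => ∑ j, ρ w.1 j * blockQuadratic ε v b j w) z = 0) ∧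
        ∀ x : U, f x = ρ x} ∧
      Module.rank ℝ Sol ≤ Fintype.card κ := by
  have hV : ∀ j z, z.1 ∈ U → DifferentiableAt ℝ (blockQuadratic ε v b j) z := fun j z hz =>
    differentiableAt_blockQuadratic
      (fun i => ((hv i).differentiableOn one_ne_zero).differentiableAt (hU.mem_nhds hz)) ε b j
  obtain ⟨x₀, hx₀⟩ := hUconn.nonempty
  refine ⟨integralSubmodule hU hk (blockHamiltonian ε v b) hV, rfl,
    rank_le_card_of_eq_zero_of_apply_eq_zero _ ⟨x₀, hx₀⟩ ?_⟩
  rintro f ⟨ρ, hρ, hcomm, hfρ⟩ hfx₀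
  have hρU := hρ.differentiableOn hk
  have hρzero : Set.EqOn ρ 0 U := eqOn_zero_of_fderiv_isBigO_self hU hUconn.isPreconnected hρU
    (fun x hx => isBigO_fderiv_of_poisson_eq_zero hU hv hvli hρU hcomm hε hb hx) hx₀
    ((hfρ ⟨x₀, hx₀⟩).symm.trans hfx₀)
  exact funext fun x => (hfρ x).trans (hρzero x.2)

/-- given a smooth pointwise linearly independent frame `v_1, …, v_n` on a
connected open set `U ⊆ ℝⁿ`, signs `ε_i ∈ {−1,1}`, and a surjective block map
`b : {1,…,n} → {1,…,m}`, set `V_j(x,p) = ∑_{i : b i = j} ε_i ⟨v_i(x), p⟩²` and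
`H = ½ ∑_j V_j`. Then the smooth maps `ρ : U → ℝᵐ` such that
`I_ρ(x,p) = ∑_j ρ_j(x) V_j(x,p)` Poisson-commutes with `H` on `U × ℝⁿ` form a real
vector space of dimension at most `m` (realised as a submodule of the functions
`U → ℝᵐ`, a function on `U` being the restriction of any total map agreeing with it). -/
theorem stmt8 (n m : ℕ) (hn : 1 ≤ n) (hm : 1 ≤ m)
    (U : Set (Fin n → ℝ)) (hUopen : IsOpen U) (hUconn : IsConnected U)
    (v : Fin n → (Fin n → ℝ) → (Fin n → ℝ))
    (hvsmooth : ∀ i, ContDiffOn ℝ (⊤ : ℕ∞) (v i) U)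
    (hvindep : ∀ x ∈ U, LinearIndependent ℝ (fun i => v i x))
    (ε : Fin n → ℝ) (hε : ∀ i, ε i = 1 ∨ ε i = -1)
    (b : Fin n → Fin m) (hb : Function.Surjective b)
    (V : Fin m → (Fin n → ℝ) × (Fin n → ℝ) → ℝ)
    (hV : ∀ j, V j = fun z => ∑ i ∈ Finset.univ.filter (fun i => b i = j),
      ε i * (∑ s : Fin n, v i z.1 s * z.2 s) ^ 2)
    (H : (Fin n → ℝ) × (Fin n → ℝ) → ℝ)
    (hH : H = fun z => (1 / 2 : ℝ) * ∑ j : Fin m, V j z) :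
    ∃ Sol : Submodule ℝ (↥U → (Fin m → ℝ)),
      (Sol : Set (↥U → (Fin m → ℝ)))
        = {f | ∃ ρ : (Fin n → ℝ) → (Fin m → ℝ), ContDiffOn ℝ (⊤ : ℕ∞) ρ U ∧
            (∀ z : (Fin n → ℝ) × (Fin n → ℝ), z.1 ∈ U →
              poisson H (fun w => ∑ j : Fin m, ρ w.1 j * V j w) z = 0) ∧
            ∀ x : U, f x = ρ ↑x} ∧
      Module.rank ℝ Sol ≤ (m : Cardinal) := by
  obtain rfl : V = blockQuadratic ε v b := funext hV
  obtain rfl : H = blockHamiltonian ε v b := hH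
  simpa only [Fintype.card_fin] using stmt8_general hUopen hUconn
    (fun i => (hvsmooth i).of_le (by simp)) hvindep
    (fun i => by rcases hε i with h | h <;> simp [h]) hb (by simp : ((⊤ : ℕ∞) : WithTop ℕ∞) ≠ 0)
end
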